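/- arXiv:2207.10419 — 2 statements merged into one kernel-verified Lean document; each statement's English description precedes it below -/
import Mathlib

section
/- Let z₀ ∈ ℂ with |Im(z₀)| < 1/2 and suppose ζ(1/2 − iz₀) = 0. Then for every even Schwartz function f : ℝ → ℂ with ∫_ℝ f(x) dx = 0, one has ∫₀^∞ (ℰf)(u) u^{−iz₀} d*u = 0. -/
/-!
Put `s = 1/2 - i z₀`, so that `0 < re s < 1`. The integral in question is the Mellin transform at
`s` of `F u = ∑_{n ≥ 1} f (n u)`. For `re s > 1`, integrating term by term gives
`mellin F s = ζ(s) mellin f s`, and the point is to continue this identity to `re s > 0`.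

At infinity `F` decays like `f`. Near `0` it is bounded: the Riemann sum `u F(u)` differs from
`∫₀^∞ f = 0` by at most the mesh `u` times the total variation of `f`, so that
`‖F u‖ ≤ ∫₀^∞ ‖f'‖`. Hence both `mellin F` and `mellin f` are holomorphic on `re s > 0`, and the
identity theorem applies once the pole of `ζ` is cleared by the factor `s - 1`.
-/

open MeasureTheory Set

/-- `(ℰ f)(u) = u^{1/2} ∑_{n ≥ 1} f(n u)`. -/
noncomputable def Emap (f : ℝ → ℂ) (u : ℝ) : ℂ :=
  (u : ℂ) ^ ((1 : ℂ)/2) * ∑' n : ℕ, f ((n + 1) * u)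

open Filter Topology Asymptotics

section HalfLine

variable {E : Type*} [NormedAddCommGroup E] {f f' : ℝ → E} {a C : ℝ}

lemma locallyIntegrableOn_Ioi_zero_of_norm_le
    (hmeas : AEStronglyMeasurable f (volume.restrict (Ioi 0))) (hC : ∀ x ∈ Ioi 0, ‖f x‖ ≤ C) :
    LocallyIntegrableOn f (Ioi 0) :=
  locallyIntegrableOn_of_locallyIntegrable_restrict
    ((memLp_top_of_bound hmeas C (ae_restrict_of_forall_mem measurableSet_Ioi hC)).locallyIntegrable
      le_top)

lemma isBigO_nhdsGT_zero_rpow_neg_zero_of_norm_le (hC : ∀ x ∈ Ioi 0, ‖f x‖ ≤ C) :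
    f =O[𝓝[>] 0] fun x : ℝ => x ^ (-(0 : ℝ)) := by
  refine .of_bound C ?_
  filter_upwards [self_mem_nhdsWithin] with x hx
  simpa using hC x hx

variable [NormedSpace ℝ E]

lemma aestronglyMeasurable_of_hasDerivAt_Ioi (hderiv : ∀ x ∈ Ioi 0, HasDerivAt f (f' x) x) :
    AEStronglyMeasurable f (volume.restrict (Ioi 0)) :=
  ContinuousOn.aestronglyMeasurable (HasDerivAt.continuousOn hderiv) measurableSet_Ioi

variable [CompleteSpace E]

lemma norm_le_integral_norm_of_isBigO (ha : 0 < a)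
    (hderiv : ∀ x ∈ Ioi 0, HasDerivAt f (f' x) x) (hf' : IntegrableOn f' (Ioi 0))
    (hdecay : f =O[atTop] fun x : ℝ => x ^ (-a)) :
    ∀ x ∈ Ioi 0, ‖f x‖ ≤ ∫ y in Ioi 0, ‖f' y‖ := by
  intro x (hx : 0 < x)
  have hftc : ∫ y in Ioi x, f' y = 0 - f x := integral_Ioi_of_hasDerivAt_of_tendsto'
    (fun y hy => hderiv y (hx.trans_le hy)) (hf'.mono_set (Ioi_subset_Ioi hx.le))
    (hdecay.trans_tendsto (tendsto_rpow_neg_atTop ha))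
  calc ‖f x‖ = ‖∫ y in Ioi x, f' y‖ := by rw [hftc, zero_sub, norm_neg]
    _ ≤ ∫ y in Ioi x, ‖f' y‖ := norm_integral_le_integral_norm _
    _ ≤ ∫ y in Ioi 0, ‖f' y‖ := setIntegral_mono_set hf'.norm
        (Eventually.of_forall fun _ => norm_nonneg _) (Ioi_subset_Ioi hx.le).eventuallyLE

lemma integrableOn_Ioi_zero_of_hasDerivAt_of_isBigO (ha : 1 < a)
    (hderiv : ∀ x ∈ Ioi 0, HasDerivAt f (f' x) x) (hf' : IntegrableOn f' (Ioi 0))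
    (hdecay : f =O[atTop] fun x : ℝ => x ^ (-a)) : IntegrableOn f (Ioi 0) := by
  have hmeas := aestronglyMeasurable_of_hasDerivAt_Ioi hderiv
  have hbound := norm_le_integral_norm_of_isBigO (zero_lt_one.trans ha) hderiv hf' hdecay
  have hnorm : IntegrableOn (fun x => ‖f x‖) (Ioi 0) := by
    simpa using mellin_convergent_of_isBigO_scalar
      (locallyIntegrableOn_Ioi_zero_of_norm_le hmeas hbound).norm hdecay.norm_left ha
      (isBigO_nhdsGT_zero_rpow_neg_zero_of_norm_le hbound).norm_left zero_lt_one
  exact (integrable_norm_iff hmeas).1 hnorm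

end HalfLine

section RiemannSum

variable {E : Type*} [NormedAddCommGroup E] [NormedSpace ℝ E]

lemma norm_smul_sub_intervalIntegral_le [CompleteSpace E] {f f' : ℝ → E} {a b : ℝ} (hab : a ≤ b)
    (hderiv : ∀ x ∈ Ioc a b, HasDerivAt f (f' x) x) (hf : IntervalIntegrable f volume a b)
    (hf' : IntervalIntegrable f' volume a b) :
    ‖(b - a) • f b - ∫ x in a..b, f x‖ ≤ (b - a) * ∫ x in a..b, ‖f' x‖ := by
  have hpoint : ∀ x ∈ uIoc a b, ‖f b - f x‖ ≤ ∫ y in a..b, ‖f' y‖ := by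
    intro x hx
    rw [uIoc_of_le hab] at hx
    have hftc : ∫ y in x..b, f' y = f b - f x := by
      refine intervalIntegral.integral_eq_sub_of_hasDerivAt (fun y hy => ?_)
        (hf'.mono_set (uIcc_subset_uIcc_right (by simp [uIcc_of_le hab, hx.1.le, hx.2])))
      rw [uIcc_of_le hx.2] at hy
      exact hderiv y ⟨hx.1.trans_le hy.1, hy.2⟩
    calc ‖f b - f x‖ ≤ ∫ y in x..b, ‖f' y‖ := by
          rw [← hftc]
          exact intervalIntegral.norm_integral_le_integral_norm hx.2
      _ ≤ ∫ y in a..b, ‖f' y‖ :=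
          intervalIntegral.integral_mono_interval hx.1.le hx.2 le_rfl
            (Eventually.of_forall fun _ => norm_nonneg _) hf'.norm
  calc ‖(b - a) • f b - ∫ x in a..b, f x‖ = ‖∫ x in a..b, (f b - f x)‖ := by
        rw [intervalIntegral.integral_sub intervalIntegrable_const hf,
          intervalIntegral.integral_const]
    _ ≤ (∫ y in a..b, ‖f' y‖) * |b - a| :=
        intervalIntegral.norm_integral_le_of_norm_le_const hpoint
    _ = (b - a) * ∫ x in a..b, ‖f' x‖ := by rw [abs_of_nonneg (sub_nonneg.2 hab), mul_comm]

lemma hasSum_intervalIntegral_natCast {f : ℝ → E} (hf : IntegrableOn f (Ioi 0)) :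
    HasSum (fun n : ℕ => ∫ x in (n : ℝ)..n + 1, f x) (∫ x in Ioi 0, f x) := by
  have hunion : ⋃ n : ℕ, Ioc (n : ℝ) (n + 1) = Ioi 0 := by
    simpa using iUnion_Ioc_map_succ_eq_Ioi (f := ((↑) : ℕ → ℝ)) (by simp)
      (not_bddAbove_iff.2 fun x => by simpa using exists_nat_gt x)
  have hdisj : Pairwise (Function.onFun Disjoint fun n : ℕ => Ioc (n : ℝ) (n + 1)) := by
    simpa using (Nat.mono_cast (α := ℝ)).pairwise_disjoint_on_Ioc_succ
  rw [← hunion] at hf ⊢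
  simpa only [intervalIntegral.integral_of_le (le_add_of_nonneg_right zero_le_one)] using
    hasSum_integral_iUnion (fun _ => measurableSet_Ioc) hdisj hf

variable [CompleteSpace E] {f f' : ℝ → E}

lemma norm_sub_intervalIntegral_natCast_le (hderiv : ∀ x ∈ Ioi 0, HasDerivAt f (f' x) x)
    (hf : IntegrableOn f (Ioi 0)) (hf' : IntegrableOn f' (Ioi 0)) (n : ℕ) :
    ‖f (n + 1) - ∫ x in (n : ℝ)..n + 1, f x‖ ≤ ∫ x in (n : ℝ)..n + 1, ‖f' x‖ := by
  have hle : (n : ℝ) ≤ n + 1 := by simp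
  have hsub : Ioc (n : ℝ) (n + 1) ⊆ Ioi 0 := fun x hx => n.cast_nonneg.trans_lt hx.1
  simpa using norm_smul_sub_intervalIntegral_le hle (fun x hx => hderiv x (hsub hx))
    ((intervalIntegrable_iff_integrableOn_Ioc_of_le hle).2 (hf.mono_set hsub))
    ((intervalIntegrable_iff_integrableOn_Ioc_of_le hle).2 (hf'.mono_set hsub))

lemma summable_natCast_add_one_of_integrableOn (hderiv : ∀ x ∈ Ioi 0, HasDerivAt f (f' x) x)
    (hf : IntegrableOn f (Ioi 0)) (hf' : IntegrableOn f' (Ioi 0)) :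
    Summable fun n : ℕ => f (n + 1) := by
  have hdiff : Summable fun n : ℕ => f (n + 1) - ∫ x in (n : ℝ)..n + 1, f x :=
    (hasSum_intervalIntegral_natCast hf'.norm).summable.of_norm_bounded
      (norm_sub_intervalIntegral_natCast_le hderiv hf hf')
  simpa using hdiff.add (hasSum_intervalIntegral_natCast hf).summable

lemma norm_tsum_natCast_add_one_sub_integral_le (hderiv : ∀ x ∈ Ioi 0, HasDerivAt f (f' x) x)
    (hf : IntegrableOn f (Ioi 0)) (hf' : IntegrableOn f' (Ioi 0)) :
    ‖∑' n : ℕ, f (n + 1) - ∫ x in Ioi 0, f x‖ ≤ ∫ x in Ioi 0, ‖f' x‖ :=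
  ((summable_natCast_add_one_of_integrableOn hderiv hf hf').hasSum.sub
    (hasSum_intervalIntegral_natCast hf)).norm_le_of_bounded
    (hasSum_intervalIntegral_natCast hf'.norm)
    (norm_sub_intervalIntegral_natCast_le hderiv hf hf')

end RiemannSum

/-- The sum `∑_{n ≥ 1} f (n u)` over the dilates of `f`, so that `ℰ f` is `u ^ (1/2)` times it. -/
noncomputable def dilateSum {E : Type*} [AddCommMonoid E] [TopologicalSpace E]
    (f : ℝ → E) (u : ℝ) : E :=
  ∑' n : ℕ, f ((n + 1) * u)

section DilateSum

variable {E : Type*} [NormedAddCommGroup E]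

lemma summable_natCast_add_one_rpow_neg {a : ℝ} (ha : 1 < a) :
    Summable fun n : ℕ => ((n : ℝ) + 1) ^ (-a) := by
  simpa using (summable_nat_add_iff 1).2 (Real.summable_nat_rpow.2 (neg_lt_neg ha))

lemma dilateSum_isBigO_atTop {f : ℝ → E} {a : ℝ} (ha : 1 < a)
    (hf : f =O[atTop] fun x : ℝ => x ^ (-a)) :
    dilateSum f =O[atTop] fun u : ℝ => u ^ (-a) := by
  obtain ⟨C, hC⟩ := hf.bound
  obtain ⟨x₀, hx₀⟩ := eventually_atTop.1 hC
  refine .of_bound (∑' n : ℕ, C * ((n : ℝ) + 1) ^ (-a)) ?_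
  filter_upwards [eventually_ge_atTop x₀, eventually_gt_atTop 0] with u hux hu
  have hterm (n : ℕ) : ‖f ((n + 1) * u)‖ ≤ C * ((n : ℝ) + 1) ^ (-a) * ‖u ^ (-a)‖ := by
    have hle : u ≤ (n + 1) * u := le_mul_of_one_le_left hu.le (by simp)
    refine (hx₀ _ (hux.trans hle)).trans_eq ?_
    rw [Real.mul_rpow (by positivity) hu.le, norm_mul,
      Real.norm_of_nonneg (by positivity : (0 : ℝ) ≤ ((n : ℝ) + 1) ^ (-a)), mul_assoc]
  exact tsum_of_norm_bounded
    (((summable_natCast_add_one_rpow_neg ha).mul_left C).hasSum.mul_right _) hterm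

lemma aestronglyMeasurable_dilateSum {f : ℝ → E} (hf : ContinuousOn f (Ioi 0))
    (hsum : ∀ u ∈ Ioi (0 : ℝ), Summable fun n : ℕ => f ((n + 1) * u)) :
    AEStronglyMeasurable (dilateSum f) (volume.restrict (Ioi 0)) := by
  refine aestronglyMeasurable_of_tendsto_ae atTop
    (f := fun (N : ℕ) (u : ℝ) => ∑ n ∈ Finset.range N, f ((n + 1) * u)) (fun N => ?_) ?_
  · refine ContinuousOn.aestronglyMeasurable
      (continuousOn_finsetSum _ fun n _ => hf.comp (by fun_prop) fun u (hu : 0 < u) => ?_)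
      measurableSet_Ioi
    exact mul_pos n.cast_add_one_pos hu
  · filter_upwards [ae_restrict_mem measurableSet_Ioi] with u hu
    exact (hsum u hu).hasSum.tendsto_sum_nat

lemma integrableOn_Ioi_zero_comp_mul_right {f : ℝ → E} (hf : IntegrableOn f (Ioi 0))
    {u : ℝ} (hu : 0 < u) : IntegrableOn (fun x => f (x * u)) (Ioi 0) := by
  rwa [integrableOn_Ioi_comp_mul_right_iff f 0 hu, zero_mul]

variable [NormedSpace ℝ E] {f f' : ℝ → E}

lemma hasDerivAt_comp_mul_right_of_Ioi (hderiv : ∀ x ∈ Ioi 0, HasDerivAt f (f' x) x) {u : ℝ}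
    (hu : 0 < u) : ∀ x ∈ Ioi 0, HasDerivAt (fun x => f (x * u)) (u • f' (x * u)) x :=
  fun x hx => (hderiv _ (mul_pos hx hu)).scomp x (hasDerivAt_mul_const u)

variable [CompleteSpace E]

lemma summable_dilates (hderiv : ∀ x ∈ Ioi 0, HasDerivAt f (f' x) x)
    (hf : IntegrableOn f (Ioi 0)) (hf' : IntegrableOn f' (Ioi 0)) {u : ℝ} (hu : 0 < u) :
    Summable fun n : ℕ => f ((n + 1) * u) :=
  summable_natCast_add_one_of_integrableOn (hasDerivAt_comp_mul_right_of_Ioi hderiv hu)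
    (integrableOn_Ioi_zero_comp_mul_right hf hu)
    ((integrableOn_Ioi_zero_comp_mul_right hf' hu).smul u)

lemma norm_dilateSum_sub_inv_smul_integral_le (hderiv : ∀ x ∈ Ioi 0, HasDerivAt f (f' x) x)
    (hf : IntegrableOn f (Ioi 0)) (hf' : IntegrableOn f' (Ioi 0)) {u : ℝ} (hu : 0 < u) :
    ‖dilateSum f u - u⁻¹ • ∫ x in Ioi 0, f x‖ ≤ ∫ x in Ioi 0, ‖f' x‖ := by
  have hbound := norm_tsum_natCast_add_one_sub_integral_le
    (hasDerivAt_comp_mul_right_of_Ioi hderiv hu) (integrableOn_Ioi_zero_comp_mul_right hf hu)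
    ((integrableOn_Ioi_zero_comp_mul_right hf' hu).smul u)
  have hvar : ∫ x in Ioi 0, ‖u • f' (x * u)‖ = ∫ x in Ioi 0, ‖f' x‖ := by
    simp_rw [norm_smul, Real.norm_of_nonneg hu.le, integral_const_mul]
    simpa using integral_comp_mul_right_Ioi' (fun x => ‖f' x‖) 0 hu
  rwa [hvar, integral_comp_mul_right_Ioi f 0 hu, zero_mul] at hbound

variable {a : ℝ}

lemma aestronglyMeasurable_dilateSum_of_isBigO (ha : 1 < a)
    (hderiv : ∀ x ∈ Ioi 0, HasDerivAt f (f' x) x) (hf' : IntegrableOn f' (Ioi 0))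
    (hdecay : f =O[atTop] fun x : ℝ => x ^ (-a)) :
    AEStronglyMeasurable (dilateSum f) (volume.restrict (Ioi 0)) :=
  aestronglyMeasurable_dilateSum (HasDerivAt.continuousOn hderiv) fun _ hu =>
    summable_dilates hderiv
      (integrableOn_Ioi_zero_of_hasDerivAt_of_isBigO ha hderiv hf' hdecay) hf' hu

lemma norm_dilateSum_le_integral_norm (ha : 1 < a)
    (hderiv : ∀ x ∈ Ioi 0, HasDerivAt f (f' x) x) (hf' : IntegrableOn f' (Ioi 0))
    (hdecay : f =O[atTop] fun x : ℝ => x ^ (-a)) (hf0 : ∫ x in Ioi 0, f x = 0) :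
    ∀ u ∈ Ioi 0, ‖dilateSum f u‖ ≤ ∫ x in Ioi 0, ‖f' x‖ := fun u hu => by
  simpa [hf0] using norm_dilateSum_sub_inv_smul_integral_le hderiv
    (integrableOn_Ioi_zero_of_hasDerivAt_of_isBigO ha hderiv hf' hdecay) hf' hu

end DilateSum

section Mellin

variable {E : Type*} [NormedAddCommGroup E] [NormedSpace ℂ E] {f f' : ℝ → E} {s : ℂ}

lemma integral_norm_cpow_smul_comp_mul_left (f : ℝ → E) (s : ℂ) {c : ℝ} (hc : 0 < c) :
    ∫ t in Ioi (0 : ℝ), ‖(t : ℂ) ^ (s - 1) • f (c * t)‖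
      = c ^ (-s.re) * ∫ t in Ioi (0 : ℝ), ‖(t : ℂ) ^ (s - 1) • f t‖ := by
  have hscale : EqOn (fun t : ℝ => ‖(t : ℂ) ^ (s - 1) • f (c * t)‖)
      (fun t : ℝ => c ^ (1 - s.re) * ‖((c * t : ℝ) : ℂ) ^ (s - 1) • f (c * t)‖) (Ioi 0) := by
    intro t (ht : 0 < t)
    simp only [norm_smul, Complex.norm_cpow_eq_rpow_re_of_pos ht,
      Complex.norm_cpow_eq_rpow_re_of_pos (mul_pos hc ht), Complex.sub_re, Complex.one_re,
      Real.mul_rpow hc.le ht.le]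
    rw [← mul_assoc, ← mul_assoc, ← Real.rpow_add hc]
    simp
  rw [setIntegral_congr_fun measurableSet_Ioi hscale, integral_const_mul,
    integral_comp_mul_left_Ioi (fun t : ℝ => ‖(t : ℂ) ^ (s - 1) • f t‖) 0 hc, mul_zero,
    smul_eq_mul, ← mul_assoc, ← Real.rpow_neg_one, ← Real.rpow_add hc]
  ring_nf

lemma mellin_dilateSum_of_one_lt_re (hf : MellinConvergent f s) (hs : 1 < s.re) :
    mellin (dilateSum f) s = riemannZeta s • mellin f s := by
  have hpos (n : ℕ) : (0 : ℝ) < (n : ℝ) + 1 := n.cast_add_one_pos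
  have hnorm : Summable fun n : ℕ => ∫ t in Ioi (0 : ℝ), ‖(t : ℂ) ^ (s - 1) • f ((n + 1) * t)‖ := by
    simp_rw [fun n : ℕ => integral_norm_cpow_smul_comp_mul_left f s (hpos n)]
    exact (summable_natCast_add_one_rpow_neg hs).mul_right _
  have hzeta : Summable fun n : ℕ => 1 / ((n : ℂ) + 1) ^ s := by
    simpa using (summable_nat_add_iff 1).2 (Complex.summable_one_div_nat_cpow.2 hs)
  calc mellin (dilateSum f) s
      = ∫ t in Ioi (0 : ℝ), ∑' n : ℕ, (t : ℂ) ^ (s - 1) • f ((n + 1) * t) := by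
        simp only [mellin, dilateSum, tsum_const_smul'']
    _ = ∑' n : ℕ, mellin (fun t => f ((n + 1) * t)) s :=
        (integral_tsum_of_summable_integral_norm
          (fun n => (MellinConvergent.comp_mul_left (hpos n)).2 hf) hnorm).symm
    _ = ∑' n : ℕ, (1 / ((n : ℂ) + 1) ^ s) • mellin f s := by
        simp_rw [fun n : ℕ => mellin_comp_mul_left f s (hpos n), Complex.cpow_neg]
        simp
    _ = riemannZeta s • mellin f s := by
        rw [hzeta.tsum_smul_const, zeta_eq_tsum_one_div_nat_add_one_cpow hs]

section BoundedMellin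

variable {a C : ℝ}

lemma mellinConvergent_of_norm_le_of_isBigO
    (hmeas : AEStronglyMeasurable f (volume.restrict (Ioi 0))) (hC : ∀ x ∈ Ioi 0, ‖f x‖ ≤ C)
    (hdecay : f =O[atTop] fun x : ℝ => x ^ (-a)) (hs : s ∈ Complex.re ⁻¹' Ioo 0 a) :
    MellinConvergent f s :=
  mellinConvergent_of_isBigO_rpow (locallyIntegrableOn_Ioi_zero_of_norm_le hmeas hC) hdecay hs.2
    (isBigO_nhdsGT_zero_rpow_neg_zero_of_norm_le hC) hs.1

lemma differentiableOn_mellin_of_norm_le_of_isBigO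
    (hmeas : AEStronglyMeasurable f (volume.restrict (Ioi 0))) (hC : ∀ x ∈ Ioi 0, ‖f x‖ ≤ C)
    (hdecay : f =O[atTop] fun x : ℝ => x ^ (-a)) :
    DifferentiableOn ℂ (mellin f) (Complex.re ⁻¹' Ioo 0 a) := fun _ hs =>
  (mellin_differentiableAt_of_isBigO_rpow (locallyIntegrableOn_Ioi_zero_of_norm_le hmeas hC)
    hdecay hs.2 (isBigO_nhdsGT_zero_rpow_neg_zero_of_norm_le hC) hs.1).differentiableWithinAt

end BoundedMellin

section Continuation

variable [CompleteSpace E] {a : ℝ}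

lemma mellinConvergent_of_hasDerivAt_of_isBigO (hderiv : ∀ x ∈ Ioi 0, HasDerivAt f (f' x) x)
    (hf' : IntegrableOn f' (Ioi 0)) (hdecay : f =O[atTop] fun x : ℝ => x ^ (-a))
    (hs : s ∈ Complex.re ⁻¹' Ioo 0 a) : MellinConvergent f s :=
  mellinConvergent_of_norm_le_of_isBigO (aestronglyMeasurable_of_hasDerivAt_Ioi hderiv)
    (norm_le_integral_norm_of_isBigO (hs.1.trans hs.2) hderiv hf' hdecay) hdecay hs

lemma LFunctionTrivChar₁_modOne_of_ne_one (hs : s ≠ 1) :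
    DirichletCharacter.LFunctionTrivChar₁ 1 s = (s - 1) * riemannZeta s := by
  simp [hs, DirichletCharacter.LFunctionTrivChar]

lemma sub_one_smul_mellin_dilateSum (ha : 1 < a) (hderiv : ∀ x ∈ Ioi 0, HasDerivAt f (f' x) x)
    (hf' : IntegrableOn f' (Ioi 0)) (hdecay : f =O[atTop] fun x : ℝ => x ^ (-a))
    (hf0 : ∫ x in Ioi 0, f x = 0) :
    EqOn (fun s => (s - 1) • mellin (dilateSum f) s)
      (fun s => DirichletCharacter.LFunctionTrivChar₁ 1 s • mellin f s)
      (Complex.re ⁻¹' Ioo 0 a) := by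
  have hopen : IsOpen (Complex.re ⁻¹' Ioo 0 a) := isOpen_Ioo.preimage Complex.continuous_re
  have hconn : IsPreconnected (Complex.re ⁻¹' Ioo 0 a) :=
    ((convex_Ioo 0 a).linear_preimage Complex.reLm).isPreconnected
  have hleft : AnalyticOnNhd ℂ (fun s => (s - 1) • mellin (dilateSum f) s)
      (Complex.re ⁻¹' Ioo 0 a) :=
    DifferentiableOn.analyticOnNhd ((differentiableOn_id.sub_const 1).smul
      (differentiableOn_mellin_of_norm_le_of_isBigO
        (aestronglyMeasurable_dilateSum_of_isBigO ha hderiv hf' hdecay)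
        (norm_dilateSum_le_integral_norm ha hderiv hf' hdecay hf0)
        (dilateSum_isBigO_atTop ha hdecay))) hopen
  have hright : AnalyticOnNhd ℂ (fun s => DirichletCharacter.LFunctionTrivChar₁ 1 s • mellin f s)
      (Complex.re ⁻¹' Ioo 0 a) :=
    DifferentiableOn.analyticOnNhd
      ((DirichletCharacter.differentiable_LFunctionTrivChar₁ 1).differentiableOn.smul
        (differentiableOn_mellin_of_norm_le_of_isBigO
          (aestronglyMeasurable_of_hasDerivAt_Ioi hderiv)
          (norm_le_integral_norm_of_isBigO (zero_lt_one.trans ha) hderiv hf' hdecay) hdecay)) hopen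
  have hagree : ∀ s ∈ Complex.re ⁻¹' Ioo 1 a, (s - 1) • mellin (dilateSum f) s
      = DirichletCharacter.LFunctionTrivChar₁ 1 s • mellin f s := by
    intro s hs
    have hs1 : s ≠ 1 := fun h => hs.1.ne' (by simp [h])
    rw [mellin_dilateSum_of_one_lt_re (mellinConvergent_of_hasDerivAt_of_isBigO hderiv hf' hdecay
      ⟨zero_lt_one.trans hs.1, hs.2⟩) hs.1, LFunctionTrivChar₁_modOne_of_ne_one hs1, mul_smul]
  obtain ⟨σ, hσ⟩ := exists_between ha
  exact hleft.eqOn_of_preconnected_of_eventuallyEq hright hconn (z₀ := σ)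
    ⟨zero_lt_one.trans hσ.1, hσ.2⟩
    (eventually_of_mem ((isOpen_Ioo.preimage Complex.continuous_re).mem_nhds hσ) hagree)

theorem hasMellin_dilateSum (ha : 1 < a) (hderiv : ∀ x ∈ Ioi 0, HasDerivAt f (f' x) x)
    (hf' : IntegrableOn f' (Ioi 0)) (hdecay : f =O[atTop] fun x : ℝ => x ^ (-a))
    (hf0 : ∫ x in Ioi 0, f x = 0) (hs : s ∈ Complex.re ⁻¹' Ioo 0 a) (hs1 : s ≠ 1) :
    HasMellin (dilateSum f) s (riemannZeta s • mellin f s) := by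
  refine ⟨mellinConvergent_of_norm_le_of_isBigO
    (aestronglyMeasurable_dilateSum_of_isBigO ha hderiv hf' hdecay)
    (norm_dilateSum_le_integral_norm ha hderiv hf' hdecay hf0)
    (dilateSum_isBigO_atTop ha hdecay) hs, ?_⟩
  have hcleared := sub_one_smul_mellin_dilateSum ha hderiv hf' hdecay hf0 hs
  simp only [LFunctionTrivChar₁_modOne_of_ne_one hs1, mul_smul] at hcleared
  exact smul_right_injective E (sub_ne_zero.2 hs1) hcleared

end Continuation

end Mellin

section Schwartz

variable {E : Type*} [NormedAddCommGroup E] [NormedSpace ℝ E]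

lemma integral_eq_two_smul_setIntegral_Ioi_of_even {f : ℝ → E} (hf : Integrable f)
    (heven : ∀ x, f (-x) = f x) : ∫ x, f x = (2 : ℝ) • ∫ x in Ioi 0, f x := by
  have hreflect : ∫ x in Iic 0, f x = ∫ x in Ioi 0, f x := by
    simpa [heven] using integral_comp_neg_Iic 0 f
  rw [← intervalIntegral.integral_Iic_add_Ioi hf.integrableOn hf.integrableOn (b := 0), hreflect,
    two_smul]

lemma schwartzMap_isBigO_atTop_rpow (f : SchwartzMap ℝ E) (r : ℝ) :
    f =O[atTop] fun x : ℝ => x ^ r := by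
  refine ((f.isBigO_cocompact_rpow r).mono atTop_le_cocompact).congr' .rfl ?_
  filter_upwards [eventually_ge_atTop 0] with x hx
  rw [Real.norm_of_nonneg hx]

lemma schwartzMap_integrable_deriv (f : SchwartzMap ℝ E) : Integrable (deriv f) :=
  (SchwartzMap.derivCLM ℝ E f).integrable

end Schwartz

lemma Emap_mul_cpow_div_eq (f : ℝ → ℂ) (z : ℂ) {u : ℝ} (hu : 0 < u) :
    Emap f u * (u : ℂ) ^ (-(Complex.I * z)) / (u : ℂ)
      = (u : ℂ) ^ ((1 / 2 - Complex.I * z) - 1) • dilateSum f u := by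
  have hu0 : (u : ℂ) ≠ 0 := Complex.ofReal_ne_zero.2 hu.ne'
  rw [Complex.cpow_sub _ _ hu0, Complex.cpow_one, sub_eq_add_neg, Complex.cpow_add _ _ hu0,
    Emap, dilateSum, smul_eq_mul]
  ring

lemma hasMellin_dilateSum_iff_Emap {f : ℝ → ℂ} {z m : ℂ} :
    HasMellin (dilateSum f) (1 / 2 - Complex.I * z) m ↔
      IntegrableOn (fun u : ℝ => Emap f u * (u : ℂ) ^ (-(Complex.I * z)) / (u : ℂ)) (Ioi 0) ∧
        ∫ u in Ioi (0 : ℝ), Emap f u * (u : ℂ) ^ (-(Complex.I * z)) / (u : ℂ) = m := by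
  have heq : EqOn (fun u : ℝ => Emap f u * (u : ℂ) ^ (-(Complex.I * z)) / (u : ℂ))
      (fun u : ℝ => (u : ℂ) ^ ((1 / 2 - Complex.I * z) - 1) • dilateSum f u) (Ioi 0) :=
    fun _ hu => Emap_mul_cpow_div_eq f z hu
  rw [integrableOn_congr_fun heq measurableSet_Ioi, setIntegral_congr_fun measurableSet_Ioi heq]
  rfl

theorem stmt4_general {f f' : ℝ → ℂ} {a : ℝ} (ha : 1 < a)
    (hderiv : ∀ x ∈ Ioi 0, HasDerivAt f (f' x) x) (hf' : IntegrableOn f' (Ioi 0))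
    (hdecay : f =O[atTop] fun x : ℝ => x ^ (-a)) (hf0 : ∫ x in Ioi 0, f x = 0)
    {z₀ : ℂ} (him : |z₀.im| < 1 / 2) (hzero : riemannZeta (1 / 2 - Complex.I * z₀) = 0) :
    IntegrableOn (fun u : ℝ => Emap f u * (u : ℂ) ^ (-(Complex.I * z₀)) / (u : ℂ)) (Ioi 0) ∧
      ∫ u in Ioi (0 : ℝ), Emap f u * (u : ℂ) ^ (-(Complex.I * z₀)) / (u : ℂ) = 0 := by
  have hre : (1 / 2 - Complex.I * z₀).re = 1 / 2 + z₀.im := by simp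
  obtain ⟨him_lower, him_upper⟩ := abs_lt.1 him
  have hre_lt_one : (1 / 2 - Complex.I * z₀).re < 1 := by linarith
  have hmellin := hasMellin_dilateSum ha hderiv hf' hdecay hf0
    ⟨by linarith, hre_lt_one.trans ha⟩ (fun h => hre_lt_one.ne (by rw [h, Complex.one_re]))
  rw [hzero, zero_smul] at hmellin
  exact hasMellin_dilateSum_iff_Emap.1 hmellin

theorem stmt4 (z₀ : ℂ) (him : |z₀.im| < 1/2)
    (hzero : riemannZeta (1/2 - Complex.I * z₀) = 0) :
    ∀ f : SchwartzMap ℝ ℂ, (∀ x : ℝ, f (-x) = f x) → (∫ x : ℝ, f x = 0) →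
      ∫ u in Ioi (0:ℝ), Emap (⇑f) u * (u : ℂ) ^ (-(Complex.I * z₀)) / (u : ℂ) = 0 := by
  intro f heven hf0
  exact (stmt4_general one_lt_two (fun _ _ => f.differentiableAt.hasDerivAt)
    (schwartzMap_integrable_deriv f).integrableOn (schwartzMap_isBigO_atTop_rpow f _)
    (by simpa [hf0] using integral_eq_two_smul_setIntegral_Ioi_of_even f.integrable heven)
    him hzero).2
end

section
/- Let f(x) = e^{−πx²}(2πx² − 1). Then f is an even Schwartz function with ∫_ℝ f(x) dx = 0, and for every z ∈ ℂ with Im(z) > −1/2 one has ψ_f(z) = (1/4) · π^{−1/4 + iz/2} · (−1 − 2iz) · Γ(1/4 − iz/2); in particular ψ_f(z) ≠ 0 for every z with |Im(z)| < 1/2. -/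
/-!
Let `g` be the Gaussian `e^{-πx²}`. It solves the linear equation `g' = -2πx g`, whose coefficient
has temperate growth, so by induction with the Leibniz rule every derivative of `g` inherits the
rapid decay of `g`. Everything else comes from `f = -(x g)'`: being the derivative of a Schwartz
function, `f` is Schwartz and has integral zero; and since `t ^ s g(t)` vanishes at both ends of
`(0, ∞)` when `0 < Re s`, an integration by parts shows that the Mellin transform of `(x g)'` at `s`
is `1 - s` times that of `g`. The latter is `π^{-s/2} Γ(s/2) / 2`, the Archimedean factor `Γ_ℝ(s)`
up to `1/2`, which has no zeros, so with `s = 1/2 - iz` the only zero of `ψ_f` is at `s = 1`.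
-/

open MeasureTheory Set

/-- `ψ_f(z) = ∫₀^∞ f(u) u^{1/2 - iz} du/u`. -/
noncomputable def psi (f : ℝ → ℂ) (z : ℂ) : ℂ :=
  ∫ u in Ioi (0:ℝ), f u * (u : ℂ) ^ ((1 : ℂ)/2 - Complex.I * z) / (u : ℂ)

/-- The function `f(x) = e^{-π x²}(2π x² - 1)`. -/
noncomputable def f6 (x : ℝ) : ℂ :=
  Real.exp (-(Real.pi * x ^ 2)) * (2 * Real.pi * x ^ 2 - 1)

open Filter Topology
open scoped SchwartzMap ContDiff Nat

section LinearEquation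

variable {E 𝕜 : Type*} [NormedAddCommGroup E] [NormedSpace ℝ E] [NormedField 𝕜] [NormedAlgebra ℝ 𝕜]
  {f : E → 𝕜} {L : E → E →L[ℝ] 𝕜}

lemma contDiff_of_hasFDerivAt_smul (hL : ContDiff ℝ ∞ L)
    (hf : ∀ x, HasFDerivAt f (f x • L x) x) : ContDiff ℝ ∞ f := by
  refine contDiff_infty.2 fun n ↦ ?_
  induction n with
  | zero => exact contDiff_zero.2 (continuous_iff_continuousAt.2 fun x ↦ (hf x).continuousAt)
  | succ n ih =>
    exact contDiff_succ_iff_hasFDerivAt.2 ⟨_, ih.smul (contDiff_infty.1 hL n), hf⟩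

lemma exists_pow_mul_norm_iteratedFDeriv_le (hL : L.HasTemperateGrowth)
    (hf : ∀ x, HasFDerivAt f (f x • L x) x)
    (hdecay : ∀ k : ℕ, ∃ C, ∀ x, (1 + ‖x‖) ^ k * ‖f x‖ ≤ C) (n k : ℕ) :
    ∃ C, ∀ x, (1 + ‖x‖) ^ k * ‖iteratedFDeriv ℝ n f x‖ ≤ C := by
  induction n using Nat.strong_induction_on generalizing k with
  | _ n ih =>
    rcases n with _ | n
    · simpa only [norm_iteratedFDeriv_zero] using hdecay k
    obtain ⟨m, A, hA, hLA⟩ := hL.norm_iteratedFDeriv_le_uniform n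
    choose! B hB using fun i (hi : i < n + 1) ↦ ih i hi (k + m)
    have hfderiv : fderiv ℝ f = fun x ↦ f x • L x := funext fun x ↦ (hf x).fderiv
    refine ⟨∑ i ∈ Finset.range (n + 1), n.choose i * B i * A, fun x ↦ ?_⟩
    calc (1 + ‖x‖) ^ k * ‖iteratedFDeriv ℝ (n + 1) f x‖
        = (1 + ‖x‖) ^ k * ‖iteratedFDeriv ℝ n (fun y ↦ f y • L y) x‖ := by
          rw [← norm_iteratedFDeriv_fderiv, hfderiv]
      _ ≤ (1 + ‖x‖) ^ k * ∑ i ∈ Finset.range (n + 1),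
            n.choose i * ‖iteratedFDeriv ℝ i f x‖ * ‖iteratedFDeriv ℝ (n - i) L x‖ := by
          gcongr
          exact norm_iteratedFDeriv_smul_le (contDiff_of_hasFDerivAt_smul hL.1 hf) hL.1 x
            (mod_cast le_top)
      _ ≤ (1 + ‖x‖) ^ k * ∑ i ∈ Finset.range (n + 1),
            n.choose i * ‖iteratedFDeriv ℝ i f x‖ * (A * (1 + ‖x‖) ^ m) := by
          gcongr with i
          exact hLA _ (n.sub_le i) x
      _ = ∑ i ∈ Finset.range (n + 1),
            n.choose i * ((1 + ‖x‖) ^ (k + m) * ‖iteratedFDeriv ℝ i f x‖) * A := by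
          rw [Finset.mul_sum]
          exact Finset.sum_congr rfl fun i _ ↦ by ring
      _ ≤ ∑ i ∈ Finset.range (n + 1), n.choose i * B i * A := by
          gcongr with i hi
          exact hB i (Finset.mem_range.1 hi) x

/-- A rapidly decreasing solution of the linear equation `Df = f • L`, with `L` of temperate growth,
as a Schwartz function. -/
def schwartzMapOfHasFDerivAtSMul (hL : L.HasTemperateGrowth)
    (hf : ∀ x, HasFDerivAt f (f x • L x) x)
    (hdecay : ∀ k : ℕ, ∃ C, ∀ x, (1 + ‖x‖) ^ k * ‖f x‖ ≤ C) : 𝓢(E, 𝕜) where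
  toFun := f
  smooth' := contDiff_of_hasFDerivAt_smul hL.1 hf
  decay' k n := by
    obtain ⟨C, hC⟩ := exists_pow_mul_norm_iteratedFDeriv_le hL hf hdecay n k
    refine ⟨C, fun x ↦ le_trans ?_ (hC x)⟩
    gcongr
    exact le_add_of_nonneg_left zero_le_one

end LinearEquation

section Gaussian

variable {V : Type*} [NormedAddCommGroup V] [InnerProductSpace ℝ V]

lemma hasFDerivAt_cexp_neg_mul_norm_sq (b : ℂ) (x : V) :
    HasFDerivAt (fun y : V ↦ Complex.exp (-b * ‖y‖ ^ 2))
      (Complex.exp (-b * ‖x‖ ^ 2) • (innerSL ℝ x).smulRight (-2 * b)) x := by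
  have hsq : HasFDerivAt (fun y : V ↦ ((‖y‖ ^ 2 : ℝ) : ℂ))
      (Complex.ofRealCLM ∘L (2 • innerSL ℝ x)) x :=
    Complex.ofRealCLM.hasFDerivAt.comp x (hasStrictFDerivAt_norm_sq x).hasFDerivAt
  push_cast at hsq
  refine (hsq.const_mul (-b)).cexp.congr_fderiv ?_
  ext v
  simp only [smul_apply, ContinuousLinearMap.comp_apply, coe_innerSL_apply,
    Complex.ofRealCLM_apply, nsmul_eq_mul, Nat.cast_ofNat, smul_eq_mul, Complex.ofReal_mul,
    Complex.ofReal_ofNat, ContinuousLinearMap.smulRight_apply, Complex.real_smul]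
  ring

lemma one_add_pow_mul_exp_neg_mul_sq_le {r t : ℝ} (hr : 0 < r) (ht : 0 ≤ t) (k : ℕ) :
    (1 + t) ^ k * Real.exp (-r * t ^ 2) ≤ (2 / r) ^ k * k ! * Real.exp r := by
  have hpow : (1 + t) ^ k ≤ (2 / r) ^ k * (r * (1 + t ^ 2)) ^ k := by
    rw [← mul_pow, ← mul_assoc, div_mul_cancel₀ _ hr.ne']
    gcongr
    nlinarith [sq_nonneg (t - 1)]
  have hexp : (r * (1 + t ^ 2)) ^ k ≤ k ! * Real.exp (r * (1 + t ^ 2)) :=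
    (div_le_iff₀' (by positivity)).1 (Real.pow_div_factorial_le_exp _ (by positivity) k)
  calc (1 + t) ^ k * Real.exp (-r * t ^ 2)
      ≤ (2 / r) ^ k * (k ! * Real.exp (r * (1 + t ^ 2))) * Real.exp (-r * t ^ 2) := by
        gcongr
        exact hpow.trans (by gcongr)
    _ = (2 / r) ^ k * k ! * Real.exp (r * (1 + t ^ 2) + -r * t ^ 2) := by
        rw [Real.exp_add]
        ring
    _ = (2 / r) ^ k * k ! * Real.exp r := by ring_nf

variable (V) in
/-- The Gaussian `x ↦ e^{-b‖x‖²}` on a real inner product space, as a Schwartz function. -/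
noncomputable def gaussianSchwartzMap {b : ℂ} (hb : 0 < b.re) : 𝓢(V, ℂ) :=
  schwartzMapOfHasFDerivAtSMul (f := fun x : V ↦ Complex.exp (-b * ‖x‖ ^ 2))
    (((ContinuousLinearMap.smulRightL ℝ V ℂ).flip (-2 * b) ∘L innerSL ℝ).hasTemperateGrowth)
    (hasFDerivAt_cexp_neg_mul_norm_sq b)
    fun k ↦ ⟨_, fun x ↦ by
      rw [Complex.norm_exp]
      simpa [← Complex.ofReal_pow] using
        one_add_pow_mul_exp_neg_mul_sq_le hb (norm_nonneg x) k⟩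

lemma gaussianSchwartzMap_real_apply {b : ℂ} (hb : 0 < b.re) (x : ℝ) :
    gaussianSchwartzMap ℝ hb x = Complex.exp (-b * x ^ 2) := by
  change Complex.exp (-b * (‖x‖ : ℂ) ^ 2) = _
  rw [← Complex.ofReal_pow, Real.norm_eq_abs, sq_abs, Complex.ofReal_pow]

end Gaussian

section Mellin

lemma schwartzMap_isBigO_atTop_rpow_s6 {E : Type*} [NormedAddCommGroup E] [NormedSpace ℝ E]
    (g : 𝓢(ℝ, E)) (a : ℝ) : g =O[atTop] (· ^ a : ℝ → ℝ) := by
  refine ((g.isBigO_cocompact_rpow a).mono atTop_le_cocompact).congr' .rfl ?_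
  filter_upwards [eventually_ge_atTop 0] with t ht
  rw [Real.norm_of_nonneg ht]

variable {E : Type*} [NormedAddCommGroup E] [NormedSpace ℂ E] {s : ℂ}

lemma mellinConvergent_schwartzMap (g : 𝓢(ℝ, E)) (hs : 0 < s.re) : MellinConvergent g s := by
  refine mellinConvergent_of_isBigO_rpow (a := s.re + 1) (b := 0)
    (g.continuous.locallyIntegrable.locallyIntegrableOn _)
    (schwartzMap_isBigO_atTop_rpow_s6 g _) (lt_add_one _) ?_ hs
  simpa using (g.continuous.tendsto 0).isBigO_one ℝ |>.mono nhdsWithin_le_nhds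

lemma tendsto_cpow_smul_schwartzMap_atTop (g : 𝓢(ℝ, E)) (s : ℂ) :
    Tendsto (fun t : ℝ ↦ (t : ℂ) ^ s • g t) atTop (𝓝 0) := by
  have hcpow : (fun t : ℝ ↦ (t : ℂ) ^ s) =O[atTop] (· ^ s.re : ℝ → ℝ) := by
    refine .of_norm_eventuallyLE ?_
    filter_upwards [eventually_gt_atTop 0] with t ht
    rw [Complex.norm_cpow_eq_rpow_re_of_pos ht]
  refine ((hcpow.smul (schwartzMap_isBigO_atTop_rpow_s6 g (-s.re - 1))).congr' .rfl ?_).trans_tendsto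
    tendsto_inv_atTop_zero
  filter_upwards [eventually_gt_atTop 0] with t ht
  rw [smul_eq_mul, ← Real.rpow_add ht, ← Real.rpow_neg_one]
  ring_nf

lemma hasDerivAt_ofReal_cpow_smul {g : ℝ → E} {g' : E} {t : ℝ} (hs : s ≠ 0) (ht : t ≠ 0)
    (hg : HasDerivAt g g' t) :
    HasDerivAt (fun t : ℝ ↦ (t : ℂ) ^ s • g t)
      ((t : ℂ) ^ (s - 1) • t • g' + s • (t : ℂ) ^ (s - 1) • g t) t := by
  have ht0 : (t : ℂ) ≠ 0 := Complex.ofReal_ne_zero.2 ht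
  have hpow : (t : ℂ) ^ (s - 1) * t = (t : ℂ) ^ s := by
    rw [Complex.cpow_sub s 1 ht0, Complex.cpow_one, div_mul_cancel₀ _ ht0]
  refine ((hasDerivAt_ofReal_cpow_const ht hs).smul hg).congr_deriv ?_
  rw [← Complex.coe_smul t, smul_smul, smul_smul, hpow]

lemma mellinConvergent_id_smul_deriv (g : 𝓢(ℝ, E)) (hs : 0 < s.re) :
    MellinConvergent (fun t ↦ t • deriv g t) s := by
  convert! mellinConvergent_schwartzMap
    (SchwartzMap.smulLeftCLM E (id : ℝ → ℝ) (SchwartzMap.derivCLM ℝ E g)) hs using 2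
  simp [Function.HasTemperateGrowth.id]

lemma mellin_id_smul_deriv [CompleteSpace E] (g : 𝓢(ℝ, E)) (hs : 0 < s.re) :
    mellin (fun t ↦ t • deriv g t) s = -s • mellin g s := by
  have hs0 : s ≠ 0 := Complex.ne_zero_of_re_pos hs
  have hconv : IntegrableOn (fun t : ℝ ↦ (t : ℂ) ^ (s - 1) • t • deriv g t) (Ioi 0) :=
    mellinConvergent_id_smul_deriv g hs
  have hconv' : IntegrableOn (fun t : ℝ ↦ s • (t : ℂ) ^ (s - 1) • g t) (Ioi 0) :=
    (mellinConvergent_schwartzMap g hs).smul s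
  have hcont : ContinuousWithinAt (fun t : ℝ ↦ (t : ℂ) ^ s • g t) (Ici 0) 0 :=
    ((Complex.continuousAt_ofReal_cpow_const 0 s (.inl hs)).smul
      g.continuous.continuousAt).continuousWithinAt
  rw [neg_smul, ← add_eq_zero_iff_eq_neg]
  calc mellin (fun t ↦ t • deriv g t) s + s • mellin g s
      = ∫ t : ℝ in Ioi 0, ((t : ℂ) ^ (s - 1) • t • deriv g t + s • (t : ℂ) ^ (s - 1) • g t) := by
        rw [mellin, mellin, ← integral_smul, ← integral_add hconv hconv']
    _ = 0 - ((0 : ℝ) : ℂ) ^ s • g 0 :=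
        integral_Ioi_of_hasDerivAt_of_tendsto hcont
          (fun t ht ↦ hasDerivAt_ofReal_cpow_smul hs0 (ne_of_gt ht) (g.hasDerivAt t))
          (hconv.add hconv') (tendsto_cpow_smul_schwartzMap_atTop g s)
    _ = 0 := by rw [Complex.ofReal_zero, Complex.zero_cpow hs0, zero_smul, sub_zero]

end Mellin

section DerivIdSMul

variable {E : Type*} [NormedAddCommGroup E] [NormedSpace ℝ E]

variable (E) in
/-- The operator `g ↦ (x g)'` on Schwartz functions of a real variable. -/
noncomputable def derivIdSMulCLM : 𝓢(ℝ, E) →L[ℝ] 𝓢(ℝ, E) :=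
  SchwartzMap.derivCLM ℝ E ∘L SchwartzMap.smulLeftCLM E (id : ℝ → ℝ)

lemma derivIdSMulCLM_apply (g : 𝓢(ℝ, E)) (x : ℝ) :
    derivIdSMulCLM E g x = g x + x • deriv g x := by
  have hderiv : HasDerivAt (fun y : ℝ ↦ y • g y) (x • deriv g x + (1 : ℝ) • g x) x :=
    (hasDerivAt_id x).smul (g.hasDerivAt x)
  change deriv (SchwartzMap.smulLeftCLM E (id : ℝ → ℝ) g) x = _
  rw [SchwartzMap.smulLeftCLM_apply .id, add_comm, ← one_smul ℝ (g x)]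
  exact hderiv.deriv

lemma integral_deriv_schwartzMap (g : 𝓢(ℝ, E)) : ∫ x, deriv g x = 0 :=
  integral_eq_zero_of_hasDerivAt_of_integrable g.hasDerivAt
    (SchwartzMap.derivCLM ℝ E g).integrable g.integrable

end DerivIdSMul

lemma mellin_derivIdSMulCLM {E : Type*} [NormedAddCommGroup E] [NormedSpace ℂ E] [CompleteSpace E]
    (g : 𝓢(ℝ, E)) {s : ℂ} (hs : 0 < s.re) :
    mellin (derivIdSMulCLM E g) s = (1 - s) • mellin g s := by
  rw [funext (derivIdSMulCLM_apply g),
    (hasMellin_add (mellinConvergent_schwartzMap g hs) (mellinConvergent_id_smul_deriv g hs)).2,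
    mellin_id_smul_deriv g hs, sub_smul, one_smul, neg_smul, sub_eq_add_neg]

lemma mellin_cexp_neg_mul_sq {b : ℝ} {s : ℂ} (hb : 0 < b) (hs : 0 < s.re) :
    mellin (fun t : ℝ ↦ Complex.exp (-b * t ^ 2)) s =
      (b : ℂ) ^ (-(s / 2)) * Complex.Gamma (s / 2) / 2 := by
  have hre : 0 < (s / 2).re := by simpa using hs
  have hb_inv : (1 / b : ℂ) ^ (s / 2) = (b : ℂ) ^ (-(s / 2)) := by
    rw [one_div, Complex.inv_cpow _ _
      (Complex.slitPlane_arg_ne_pi (Complex.ofReal_mem_slitPlane.2 hb)), Complex.cpow_neg]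
  calc mellin (fun t : ℝ ↦ Complex.exp (-b * t ^ 2)) s
      = mellin (fun t : ℝ ↦ Complex.exp (-(b * (t ^ (2 : ℝ) : ℝ)))) s := by simp
    _ = |(2 : ℝ)|⁻¹ • mellin (fun t : ℝ ↦ Complex.exp (-(b * t))) (s / (2 : ℝ)) :=
        mellin_comp_rpow (fun t : ℝ ↦ Complex.exp (-(b * t))) s 2
    _ = |(2 : ℝ)|⁻¹ • ((b : ℂ) ^ (-(s / 2)) * Complex.Gamma (s / 2)) := by
        simp only [mellin, smul_eq_mul, Complex.ofReal_ofNat]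
        rw [Complex.integral_cpow_mul_exp_neg_mul_Ioi hre hb, hb_inv]
    _ = (b : ℂ) ^ (-(s / 2)) * Complex.Gamma (s / 2) / 2 := by
        rw [abs_two, Complex.real_smul, Complex.ofReal_inv, Complex.ofReal_ofNat, inv_mul_eq_div]

lemma psi_eq_mellin (f : ℝ → ℂ) (z : ℂ) : psi f z = mellin f (1 / 2 - Complex.I * z) := by
  refine setIntegral_congr_fun measurableSet_Ioi fun u hu ↦ ?_
  have hu0 : (u : ℂ) ≠ 0 := Complex.ofReal_ne_zero.2 (ne_of_gt hu)
  simp only [smul_eq_mul]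
  rw [Complex.cpow_sub (1 / 2 - Complex.I * z) 1 hu0, Complex.cpow_one]
  ring

lemma pi_re_pos : 0 < (Real.pi : ℂ).re := Real.pi_pos

lemma f6_eq_neg_derivIdSMulCLM :
    f6 = -derivIdSMulCLM ℂ (gaussianSchwartzMap ℝ pi_re_pos) := by
  have hg : ⇑(gaussianSchwartzMap ℝ pi_re_pos) = fun x : ℝ ↦ Complex.exp (-Real.pi * x ^ 2) :=
    funext (gaussianSchwartzMap_real_apply _)
  funext x
  have hderiv : HasDerivAt (fun y : ℝ ↦ Complex.exp (-Real.pi * y ^ 2))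
      (Complex.exp (-Real.pi * x ^ 2) * (-Real.pi * (2 * x))) x := by
    simpa using (((hasDerivAt_pow 2 (x : ℂ)).const_mul (-Real.pi : ℂ)).cexp).comp_ofReal
  rw [Pi.neg_apply, derivIdSMulCLM_apply, hg, hderiv.deriv, f6]
  push_cast
  rw [Complex.real_smul]
  ring_nf

lemma mellin_f6 {s : ℂ} (hs : 0 < s.re) : mellin f6 s = (s - 1) / 2 * Complex.Gammaℝ s := by
  have hg : mellin (gaussianSchwartzMap ℝ pi_re_pos) s = Complex.Gammaℝ s / 2 := by
    rw [funext (gaussianSchwartzMap_real_apply _), mellin_cexp_neg_mul_sq Real.pi_pos hs,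
      Complex.Gammaℝ_def, neg_div]
  calc mellin f6 s
      = mellin (fun t ↦ (-1 : ℂ) • derivIdSMulCLM ℂ (gaussianSchwartzMap ℝ pi_re_pos) t) s := by
        simp [f6_eq_neg_derivIdSMulCLM, Pi.neg_def]
    _ = -((1 - s) * (Complex.Gammaℝ s / 2)) := by
        rw [mellin_const_smul, mellin_derivIdSMulCLM _ hs, hg, smul_eq_mul, smul_eq_mul,
          neg_one_mul]
    _ = (s - 1) / 2 * Complex.Gammaℝ s := by ring

lemma psi_f6 {z : ℂ} (hz : -(1 / 2) < z.im) :
    psi f6 z = (1 / 4) * (-1 - 2 * Complex.I * z) * Complex.Gammaℝ (1 / 2 - Complex.I * z) := by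
  have hs : 0 < (1 / 2 - Complex.I * z).re := by simpa using by linarith
  rw [psi_eq_mellin, mellin_f6 hs]
  ring

lemma psi_f6_eq_zero_iff {z : ℂ} (hz : -(1 / 2) < z.im) : psi f6 z = 0 ↔ z = Complex.I / 2 := by
  have hs : 0 < (1 / 2 - Complex.I * z).re := by simpa using by linarith
  have hfactor : -1 - 2 * Complex.I * z = -2 * Complex.I * (z - Complex.I / 2) := by
    linear_combination -Complex.I_mul_I
  rw [psi_f6 hz, hfactor, mul_eq_zero_iff_right (Complex.Gammaℝ_ne_zero_of_re_pos hs)]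
  simp [sub_eq_zero]

theorem stmt6 :
    (∃ F : SchwartzMap ℝ ℂ, ⇑F = f6) ∧
    (∀ x : ℝ, f6 (-x) = f6 x) ∧
    (∫ x : ℝ, f6 x = 0) ∧
    (∀ z : ℂ, -(1/2) < z.im →
      psi f6 z = (1/4) * (Real.pi : ℂ) ^ (-(1/4 : ℂ) + Complex.I * z / 2) *
        (-1 - 2 * Complex.I * z) * Complex.Gamma (1/4 - Complex.I * z / 2)) ∧
    (∀ z : ℂ, |z.im| < 1/2 → psi f6 z ≠ 0) := by
  refine ⟨⟨-derivIdSMulCLM ℂ (gaussianSchwartzMap ℝ pi_re_pos), f6_eq_neg_derivIdSMulCLM.symm⟩,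
    fun x ↦ by simp [f6], ?_, fun z hz ↦ ?_, fun z hz hzero ↦ ?_⟩
  · simp only [f6_eq_neg_derivIdSMulCLM, Pi.neg_apply, integral_neg, neg_eq_zero]
    exact integral_deriv_schwartzMap (SchwartzMap.smulLeftCLM ℂ (id : ℝ → ℝ) _)
  · have hexp : -(1 / 2 - Complex.I * z) / 2 = -(1 / 4) + Complex.I * z / 2 := by ring
    have harg : (1 / 2 - Complex.I * z) / 2 = 1 / 4 - Complex.I * z / 2 := by ring
    rw [psi_f6 hz, Complex.Gammaℝ_def, hexp, harg]
    ring
  · obtain rfl := (psi_f6_eq_zero_iff (abs_lt.1 hz).1).1 hzero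
    norm_num at hz
end
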